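/- The map f sends [0,11) into [0,11), and for every x ∈ [0,11) the itinerary k_n = ⌊f^n(x)⌋ is T-admissible: (k_n, k_{n+1}) ∈ T for every n ≥ 0. -/

import Mathlib

/-! The floor of `x ∈ [0,11)` selects a unit interval `[a, a+1)`, and on each affine branch of `f`
inside it the image is contained either in `[a, a+2)`, giving the transitions `a → a` and
`a → a + 1`, or in a single unit interval `[b, b+1)` with `(a, b) ∈ T`. Hence one step is admissible
(`chaoticF_step`). The images also stay in `[0,11)` (`chaoticF_mem`), so every iterate does, and the
one-step statement applies along the whole orbit. -/

/-- The piecewise linear, piecewise expanding interval map `f : [0,11) → [0,11)`. -/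
noncomputable def chaoticF (x : ℝ) : ℝ :=
  if x < 1 then 2 * x
  else if x < 2 then 1 + 2 * (x - 1)
  else if x < 3 then 2 + 2 * (x - 2)
  else if x < 3.5 then 3 + 4 * (x - 3)
  else if x < 4 then 2 * (x - 3.5)
  else if x < 5 then 4 + 2 * (x - 4)
  else if x < 5.5 then 2 * (x - 5)
  else if x < 6 then 5 + 4 * (x - 5.5)
  else if x < 7 then 6 + 2 * (x - 6)
  else if x < 8 then 7 + 2 * (x - 7)
  else if x < 9 then 8 + 2 * (x - 8)
  else if x < 10 then 9 + 2 * (x - 9)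
  else if x < 10.5 then 10 + 2 * (x - 10)
  else 5 + 2 * (x - 10.5)

/-- The transition set `T ⊆ {0,…,10}²`: all self-loops together with the listed
transitions. -/
def transT : Set (ℤ × ℤ) :=
  {p | 0 ≤ p.1 ∧ p.1 ≤ 10 ∧ p.1 = p.2} ∪
  {(0, 1), (1, 2), (2, 3), (3, 4), (3, 0), (4, 5), (5, 0), (5, 6), (6, 7),
   (7, 8), (8, 9), (9, 10), (10, 5)}

/-- A point of `[a, a+1)` whose image lies in `[a, a+2)` realises one of the
transitions `a → a` and `a → a + 1`. -/
lemma stay_or_step {x y : ℝ} (a : ℤ) (ha : 0 ≤ a ∧ a ≤ 10) (hT : (a, a + 1) ∈ transT)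
    (hx : (a : ℝ) ≤ x ∧ x < a + 1) (hy : (a : ℝ) ≤ y ∧ y < a + 2) :
    (⌊x⌋, ⌊y⌋) ∈ transT := by
  have h1 : ⌊x⌋ = a := Int.floor_eq_iff.2 hx
  rcases lt_or_ge y (a + 1) with h | h
  · have h2 : ⌊y⌋ = a := Int.floor_eq_iff.2 ⟨hy.1, h⟩
    rw [h1, h2]
    exact Or.inl ⟨ha.1, ha.2, rfl⟩
  · have h2 : ⌊y⌋ = a + 1 := Int.floor_eq_iff.2 (by push_cast; constructor <;> linarith [hy.2])
    rwa [h1, h2]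

lemma floor_pair_mem {x y : ℝ} (a b : ℤ) (hT : (a, b) ∈ transT)
    (hx : (a : ℝ) ≤ x ∧ x < a + 1) (hy : (b : ℝ) ≤ y ∧ y < b + 1) :
    (⌊x⌋, ⌊y⌋) ∈ transT := by
  rwa [Int.floor_eq_iff.2 hx, Int.floor_eq_iff.2 hy]

lemma chaoticF_mem {x : ℝ} (hx : x ∈ Set.Ico (0 : ℝ) 11) : chaoticF x ∈ Set.Ico (0 : ℝ) 11 := by
  obtain ⟨h0, h11⟩ := hx
  unfold chaoticF
  iterate 13
    refine iteInduction (motive := (· ∈ Set.Ico (0 : ℝ) 11))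
      (fun h => by constructor <;> linarith) (fun h => ?_)
  constructor <;> linarith

/-- Admissibility of a single step, branch by branch. -/
lemma chaoticF_step {x : ℝ} (hx : x ∈ Set.Ico (0 : ℝ) 11) : (⌊x⌋, ⌊chaoticF x⌋) ∈ transT := by
  obtain ⟨h0, h11⟩ := hx
  unfold chaoticF
  refine iteInduction (motive := fun y => (⌊x⌋, ⌊y⌋) ∈ transT) (fun _ => ?_) (fun _ => ?_)
  · exact stay_or_step 0 (by norm_num) (by norm_num [transT])
      (by push_cast; constructor <;> linarith) (by push_cast; constructor <;> linarith)
  refine iteInduction (motive := fun y => (⌊x⌋, ⌊y⌋) ∈ transT) (fun _ => ?_) (fun _ => ?_)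
  · exact stay_or_step 1 (by norm_num) (by norm_num [transT])
      (by push_cast; constructor <;> linarith) (by push_cast; constructor <;> linarith)
  refine iteInduction (motive := fun y => (⌊x⌋, ⌊y⌋) ∈ transT) (fun _ => ?_) (fun _ => ?_)
  · exact stay_or_step 2 (by norm_num) (by norm_num [transT])
      (by push_cast; constructor <;> linarith) (by push_cast; constructor <;> linarith)
  refine iteInduction (motive := fun y => (⌊x⌋, ⌊y⌋) ∈ transT) (fun _ => ?_) (fun _ => ?_)
  · exact stay_or_step 3 (by norm_num) (by norm_num [transT])
      (by push_cast; constructor <;> linarith) (by push_cast; constructor <;> linarith)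
  refine iteInduction (motive := fun y => (⌊x⌋, ⌊y⌋) ∈ transT) (fun _ => ?_) (fun _ => ?_)
  · exact floor_pair_mem 3 0 (by norm_num [transT])
      (by push_cast; constructor <;> linarith) (by push_cast; constructor <;> linarith)
  refine iteInduction (motive := fun y => (⌊x⌋, ⌊y⌋) ∈ transT) (fun _ => ?_) (fun _ => ?_)
  · exact stay_or_step 4 (by norm_num) (by norm_num [transT])
      (by push_cast; constructor <;> linarith) (by push_cast; constructor <;> linarith)
  refine iteInduction (motive := fun y => (⌊x⌋, ⌊y⌋) ∈ transT) (fun _ => ?_) (fun _ => ?_)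
  · exact floor_pair_mem 5 0 (by norm_num [transT])
      (by push_cast; constructor <;> linarith) (by push_cast; constructor <;> linarith)
  refine iteInduction (motive := fun y => (⌊x⌋, ⌊y⌋) ∈ transT) (fun _ => ?_) (fun _ => ?_)
  · exact stay_or_step 5 (by norm_num) (by norm_num [transT])
      (by push_cast; constructor <;> linarith) (by push_cast; constructor <;> linarith)
  refine iteInduction (motive := fun y => (⌊x⌋, ⌊y⌋) ∈ transT) (fun _ => ?_) (fun _ => ?_)
  · exact stay_or_step 6 (by norm_num) (by norm_num [transT])
      (by push_cast; constructor <;> linarith) (by push_cast; constructor <;> linarith)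
  refine iteInduction (motive := fun y => (⌊x⌋, ⌊y⌋) ∈ transT) (fun _ => ?_) (fun _ => ?_)
  · exact stay_or_step 7 (by norm_num) (by norm_num [transT])
      (by push_cast; constructor <;> linarith) (by push_cast; constructor <;> linarith)
  refine iteInduction (motive := fun y => (⌊x⌋, ⌊y⌋) ∈ transT) (fun _ => ?_) (fun _ => ?_)
  · exact stay_or_step 8 (by norm_num) (by norm_num [transT])
      (by push_cast; constructor <;> linarith) (by push_cast; constructor <;> linarith)
  refine iteInduction (motive := fun y => (⌊x⌋, ⌊y⌋) ∈ transT) (fun _ => ?_) (fun _ => ?_)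
  · exact stay_or_step 9 (by norm_num) (by norm_num [transT])
      (by push_cast; constructor <;> linarith) (by push_cast; constructor <;> linarith)
  refine iteInduction (motive := fun y => (⌊x⌋, ⌊y⌋) ∈ transT) (fun _ => ?_) (fun _ => ?_)
  · exact floor_pair_mem 10 10 (by norm_num [transT])
      (by push_cast; constructor <;> linarith) (by push_cast; constructor <;> linarith)
  exact floor_pair_mem 10 5 (by norm_num [transT])
    (by push_cast; constructor <;> linarith) (by push_cast; constructor <;> linarith)

/-- **Itineraries of `f` are `T`-admissible.** The map `f` sends `[0,11)` into
`[0,11)`, and for every `x ∈ [0,11)` the itinerary `k n = ⌊f^[n] x⌋` satisfies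
`(k n, k (n+1)) ∈ T` for every `n ≥ 0`. -/
theorem chaoticF_itinerary_admissible :
    (∀ x : ℝ, x ∈ Set.Ico (0 : ℝ) 11 → chaoticF x ∈ Set.Ico (0 : ℝ) 11) ∧
    (∀ x : ℝ, x ∈ Set.Ico (0 : ℝ) 11 → ∀ n : ℕ,
      (⌊chaoticF^[n] x⌋, ⌊chaoticF^[n + 1] x⌋) ∈ transT) := by
  refine ⟨fun x hx => chaoticF_mem hx, fun x hx n => ?_⟩
  rw [Function.iterate_succ_apply']
  have horbit : Set.MapsTo chaoticF (Set.Ico 0 11) (Set.Ico 0 11) := fun _ h => chaoticF_mem h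
  exact chaoticF_step (horbit.iterate n hx)
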